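/- Let f : ℝ → ℝ be a continuous function for which there exist A, α > 0 with |f(x)| ≤ A(1+|x|)^α for all x ∈ ℝ, and suppose f has only finitely many zeros. Then for every integer n ≥ 0 there exist C > 0 and T₀ > 0 such that 0 ≤ ∫_ℝ |f(x)| u_T(x) dx − |∫_ℝ f(x) u_T(x) dx| ≤ C T^{−n} for all T ≥ T₀ (both integrals converging absolutely). -/

import Mathlib

open MeasureTheory Set

noncomputable section

/-- `e2 z = e^{2πiz}`. -/
def e2 (z : ℂ) : ℂ := Complex.exp (2 * Real.pi * Complex.I * z)

/-- `φ₀` is a smooth even bump function supported in `[-1,1]` with `0 ≤ φ₀ ≤ 1`,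
`φ₀(0) = 1` and `∫ φ₀² = 1`. -/
def IsBumpBase (φ₀ : ℝ → ℝ) : Prop :=
  ContDiff ℝ (⊤ : ℕ∞) φ₀ ∧ (∀ x, φ₀ (-x) = φ₀ x) ∧ tsupport φ₀ ⊆ Set.Icc (-1) 1 ∧
  (∀ x, 0 ≤ φ₀ x ∧ φ₀ x ≤ 1) ∧ φ₀ 0 = 1 ∧ (∫ u : ℝ, (φ₀ u) ^ 2) = 1

/-- `ψ(x) = φ₀(log x)`. -/
def psiF (φ₀ : ℝ → ℝ) (x : ℝ) : ℝ := φ₀ (Real.log x)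

/-- `λ(x) = ∫₀^∞ ψ(y)ψ(x/y) dy/y`. -/
def lamF (φ₀ : ℝ → ℝ) (x : ℝ) : ℝ :=
  ∫ y in Set.Ioi (0 : ℝ), psiF φ₀ y * psiF φ₀ (x / y) / y

/-- `λ_T(x) = T x^{-2iT^{3/2}} λ(x^T)`. -/
def lamT (φ₀ : ℝ → ℝ) (T x : ℝ) : ℂ :=
  (T : ℂ) * (x : ℂ) ^ (-(2 * Complex.I * ((T ^ ((3 : ℝ) / 2) : ℝ) : ℂ))) * (lamF φ₀ (x ^ T) : ℂ)

/-- `u_T(t) = ∫₀^∞ λ_T(x) x^{it-1} dx`. -/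
def uT (φ₀ : ℝ → ℝ) (T t : ℝ) : ℂ :=
  ∫ x in Set.Ioi (0 : ℝ), lamT φ₀ T x * (x : ℂ) ^ (Complex.I * (t : ℂ) - 1)

/-!
In the variable `w = log x` the multiplicative convolution `λ` becomes `φ₀ ⋆ φ₀`, so its Mellin
transform on the imaginary axis is the square of a Fourier transform, real because `φ₀` is even.
Undoing the twist and the power in `λ_T` gives `u_T(t) = g((t - 2T^{3/2}) / T)` with `g ≥ 0` a fixed
Schwartz function.

If `f` has constant sign off a set `S`, then `∫ |f| u_T - |∫ f u_T| ≤ 2 ∫_S |f| u_T`. For large `T`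
one may take `S = (-∞, T^{3/2}]`. Writing `x = 2T^{3/2} + Ts`, on `S` we have `|s| ≥ √T`, so every
polynomial in `x` and `T` is bounded there by a polynomial in `s`, which the decay of `g` absorbs.
-/

section

open Filter
open scoped FourierTransform SchwartzMap Convolution

theorem integral_abs_sub_abs_integral_le {X : Type*} [MeasurableSpace X] {μ : Measure X}
    {f : X → ℝ} {s : Set X} (hf : Integrable f μ) (hs : MeasurableSet s)
    (hsign : (∀ x ∉ s, 0 ≤ f x) ∨ ∀ x ∉ s, f x ≤ 0) :
    (∫ x, |f x| ∂μ) - |∫ x, f x ∂μ| ≤ 2 * ∫ x in s, |f x| ∂μ := by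
  wlog hnonneg : ∀ x ∉ s, 0 ≤ f x generalizing f
  · have hneg : ∀ x ∉ s, 0 ≤ -f x := by simpa using hsign.resolve_left hnonneg
    simpa [integral_neg] using this hf.neg (.inl hneg) hneg
  have hpointwise : ∀ x, |f x| - f x ≤ s.indicator (fun y => 2 * |f y|) x := fun x => by
    by_cases hx : x ∈ s
    · rw [indicator_of_mem hx]
      linarith [neg_abs_le (f x)]
    · rw [indicator_of_notMem hx, abs_of_nonneg (hnonneg x hx), sub_self]
  calc (∫ x, |f x| ∂μ) - |∫ x, f x ∂μ| ≤ (∫ x, |f x| ∂μ) - ∫ x, f x ∂μ := by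
        gcongr
        exact le_abs_self _
    _ = ∫ x, (|f x| - f x) ∂μ := (integral_sub hf.abs hf).symm
    _ ≤ ∫ x, s.indicator (fun y => 2 * |f y|) x ∂μ :=
        integral_mono (hf.abs.sub hf) ((hf.abs.const_mul 2).indicator hs) hpointwise
    _ = 2 * ∫ x in s, |f x| ∂μ := by rw [integral_indicator hs, integral_const_mul]

theorem eventually_lt_or_eventually_gt_of_eventually_ne {X Y : Type*}
    [ConditionallyCompleteLinearOrder X] [DenselyOrdered X] [TopologicalSpace X] [OrderTopology X]
    [LinearOrder Y] [TopologicalSpace Y] [OrderClosedTopology Y] {f : X → Y} {c : Y}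
    (hf : Continuous f) (hne : ∀ᶠ x in atTop, f x ≠ c) :
    (∀ᶠ x in atTop, c < f x) ∨ ∀ᶠ x in atTop, f x < c := by
  obtain ⟨R, hR⟩ := eventually_atTop.mp hne
  by_contra! hcon
  obtain ⟨⟨x, hx, hxc⟩, y, hy, hyc⟩ :=
    And.intro ((frequently_atTop.mp hcon.1) R) ((frequently_atTop.mp hcon.2) R)
  obtain ⟨z, hz, rfl⟩ := isPreconnected_Ici.intermediate_value hx hy hf.continuousOn
    ⟨hxc, hyc⟩
  exact hR z hz rfl

theorem integral_Ioi_zero_eq_integral_exp_smul {E : Type*} [NormedAddCommGroup E] [NormedSpace ℝ E]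
    (F : ℝ → E) : ∫ x in Ioi (0 : ℝ), F x = ∫ w : ℝ, Real.exp w • F (Real.exp w) := by
  have h := integral_image_eq_integral_abs_deriv_smul MeasurableSet.univ
    (fun x _ => (Real.hasDerivAt_exp x).hasDerivWithinAt) Real.exp_injective.injOn F
  simpa only [image_univ, Real.range_exp, setIntegral_univ, Real.abs_exp] using h

theorem integrable_one_add_norm_pow_mul_norm {E F : Type*}
    [NormedAddCommGroup E] [NormedSpace ℝ E] [MeasurableSpace E] [BorelSpace E]
    [SecondCountableTopology E] [NormedAddCommGroup F] [NormedSpace ℝ F]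
    (μ : Measure E) [μ.HasTemperateGrowth] (g : 𝓢(E, F)) (k : ℕ) :
    Integrable (fun x => (1 + ‖x‖) ^ k * ‖g x‖) μ := by
  simp only [add_comm (1 : ℝ), add_pow, one_pow, mul_one, Finset.sum_mul]
  refine integrable_finsetSum _ fun j _ => ?_
  simpa only [mul_right_comm] using (g.integrable_pow_mul μ j).mul_const (k.choose j : ℝ)

theorem conj_fourierInv_of_hermitian {V : Type*} [NormedAddCommGroup V] [InnerProductSpace ℝ V]
    [MeasurableSpace V] [BorelSpace V] [FiniteDimensional ℝ V] {h : V → ℂ}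
    (hh : ∀ v, h (-v) = starRingEnd ℂ (h v)) (w : V) : starRingEnd ℂ (𝓕⁻ h w) = 𝓕⁻ h w := by
  rw [Real.fourierInv_eq', ← integral_conj, ← integral_neg_eq_self]
  refine integral_congr_ae (.of_forall fun v => ?_)
  simp [hh, ← Complex.exp_conj, Complex.conj_ofNat]

theorem lamF_exp_eq_convolution (φ : ℝ → ℝ) (w : ℝ) :
    (lamF φ (Real.exp w) : ℂ) =
      ((fun u => (φ u : ℂ)) ⋆[ContinuousLinearMap.mul ℂ ℂ] fun u => (φ u : ℂ)) w := by
  have hexp : lamF φ (Real.exp w) = ∫ u : ℝ, φ u * φ (w - u) := by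
    simp only [lamF, psiF, integral_Ioi_zero_eq_integral_exp_smul, ← Real.exp_sub, Real.log_exp,
      smul_eq_mul, mul_div_cancel₀ _ (Real.exp_ne_zero _)]
  rw [hexp, ← integral_complex_ofReal]
  simp only [convolution, ContinuousLinearMap.mul_apply', Complex.ofReal_mul]

theorem mellin_lamF {φ : ℝ → ℝ} (hφ : Integrable φ) (s : ℝ) :
    mellin (fun x => (lamF φ x : ℂ)) (s * Complex.I) =
      𝓕⁻ (fun u => (φ u : ℂ)) (s / (2 * Real.pi)) ^ 2 := by
  have hφc : Integrable fun u => (φ u : ℂ) := hφ.ofReal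
  rw [mellin_eq_fourier]
  simp only [Complex.mul_re, Complex.ofReal_re, Complex.I_re, mul_zero, Complex.ofReal_im,
    Complex.I_im, sub_zero, neg_zero, zero_mul, Real.exp_zero, one_smul, lamF_exp_eq_convolution]
  rw [← Real.fourierInv_eq_fourier_comp_neg, Real.fourierInv_eq_fourier_neg,
    Real.fourier_mul_convolution_eq hφc hφc, Real.fourierInv_eq_fourier_neg]
  simp [sq]

theorem uT_eq_mellin (φ : ℝ → ℝ) {T : ℝ} (hT : 0 < T) (t : ℝ) :
    uT φ T t = mellin (fun x => (lamF φ x : ℂ))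
      (((t - 2 * T ^ ((3 : ℝ) / 2)) / T : ℝ) * Complex.I) := by
  set a : ℂ := -(2 * Complex.I * ((T ^ ((3 : ℝ) / 2) : ℝ) : ℂ))
  calc uT φ T t
      = mellin (fun x => (T : ℂ) • (x : ℂ) ^ a • (lamF φ (x ^ T) : ℂ)) (Complex.I * t) := by
        simp only [uT, lamT, mellin, smul_eq_mul, a, ← mul_assoc, mul_comm]
    _ = (T : ℂ) • |T|⁻¹ • mellin (fun x => (lamF φ x : ℂ)) ((Complex.I * t + a) / T) := by
        rw [mellin_const_smul, mellin_cpow_smul,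
          mellin_comp_rpow (fun x => (lamF φ x : ℂ))]
    _ = _ := by
        rw [abs_of_pos hT, Complex.real_smul, smul_eq_mul, Complex.ofReal_inv,
          mul_inv_cancel_left₀ (Complex.ofReal_ne_zero.mpr hT.ne')]
        congr 1
        simp only [a]
        push_cast
        ring

/-- The Schwartz function `|φ̌(s / 2π)|²` for even `φ`, of which `u_T` is the rescaling by `T`
centred at `2T^{3/2}`. To have a real Schwartz function with no parity assumption, it is encoded as
the real part of `φ̌(s / 2π)²`. -/
def uTProfile (φ : 𝓢(ℝ, ℝ)) : 𝓢(ℝ, ℝ) :=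
  let ψ : 𝓢(ℝ, ℂ) := 𝓕⁻ (φ.postcompCLM Complex.ofRealCLM)
  let scaling := ContinuousLinearEquiv.unitsEquivAut ℝ (Units.mk0 (2 * Real.pi)⁻¹ (by positivity))
  (SchwartzMap.compCLMOfContinuousLinearEquiv ℝ scaling
    (SchwartzMap.pairing (ContinuousLinearMap.mul ℂ ℂ) ψ ψ)).postcompCLM Complex.reCLM

theorem uTProfile_apply (φ : 𝓢(ℝ, ℝ)) (s : ℝ) :
    uTProfile φ s = (𝓕⁻ (fun u => (φ u : ℂ)) (s / (2 * Real.pi)) ^ 2).re := by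
  have hcoe : ⇑(φ.postcompCLM Complex.ofRealCLM) = fun u => (φ u : ℂ) := rfl
  simp [uTProfile, sq, div_eq_mul_inv, SchwartzMap.fourierInv_coe, hcoe]

theorem uTProfile_nonneg {φ : 𝓢(ℝ, ℝ)} (hφ : Function.Even φ) (s : ℝ) : 0 ≤ uTProfile φ s := by
  obtain ⟨r, hr⟩ := Complex.conj_eq_iff_real.mp <|
    conj_fourierInv_of_hermitian (h := fun u => (φ u : ℂ)) (fun u => by simp [hφ u])
      (s / (2 * Real.pi))
  rw [uTProfile_apply, hr, ← Complex.ofReal_pow, Complex.ofReal_re]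
  positivity

theorem re_uT_eq_uTProfile (φ : 𝓢(ℝ, ℝ)) {T : ℝ} (hT : 0 < T) (t : ℝ) :
    (uT φ T t).re = uTProfile φ ((t - 2 * T ^ ((3 : ℝ) / 2)) / T) := by
  rw [uT_eq_mellin _ hT, mellin_lamF φ.integrable, uTProfile_apply]

theorem integrable_mul_comp_sub_div {f : ℝ → ℝ} (hf : AEStronglyMeasurable f) {A : ℝ} {k : ℕ}
    (hbd : ∀ x, |f x| ≤ A * (1 + |x|) ^ k) (g : 𝓢(ℝ, ℝ)) (c : ℝ) {T : ℝ} (hT : T ≠ 0) :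
    Integrable fun x => f x * g ((x - c) / T) := by
  have hA : 0 ≤ A := by simpa using (abs_nonneg _).trans (hbd 0)
  have hgrowth (x : ℝ) : 1 + |x| ≤ (1 + |c| + |T|) * (1 + |(x - c) / T|) := by
    have htriangle : |x| ≤ |T| * |(x - c) / T| + |c| := by
      rw [← abs_mul, mul_div_cancel₀ _ hT]
      simpa using abs_add_le (x - c) c
    nlinarith [abs_nonneg c, abs_nonneg T, abs_nonneg ((x - c) / T)]
  have hdom : Integrable fun x =>
      A * (1 + |c| + |T|) ^ k * ((1 + ‖(x - c) / T‖) ^ k * ‖g ((x - c) / T)‖) :=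
    (((integrable_one_add_norm_pow_mul_norm volume g k).comp_div hT).comp_sub_right c).const_mul _
  refine hdom.mono' (hf.mul (by fun_prop)) (.of_forall fun x => ?_)
  calc ‖f x * g ((x - c) / T)‖ = |f x| * ‖g ((x - c) / T)‖ := norm_mul _ _
    _ ≤ A * ((1 + |c| + |T|) * (1 + |(x - c) / T|)) ^ k * ‖g ((x - c) / T)‖ := by
        grw [hbd x, hgrowth x]
    _ = _ := by rw [mul_pow, Real.norm_eq_abs ((x - c) / T)]; ring

theorem rpow_three_halves_eq_mul_sqrt {T : ℝ} (hT : 0 ≤ T) : T ^ ((3 : ℝ) / 2) = T * √T := by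
  rw [show (3 : ℝ) / 2 = 1 + 1 / 2 by norm_num, Real.rpow_add_of_nonneg hT (by norm_num)
    (by norm_num), Real.rpow_one, Real.sqrt_eq_rpow]

theorem sqrt_le_abs_sub_div {T x : ℝ} (hT : 0 < T) (hx : x ≤ T ^ ((3 : ℝ) / 2)) :
    √T ≤ |(x - 2 * T ^ ((3 : ℝ) / 2)) / T| := by
  rw [rpow_three_halves_eq_mul_sqrt hT.le] at hx ⊢
  rw [abs_div, abs_of_pos hT, le_div_iff₀ hT]
  linarith [neg_le_abs (x - 2 * (T * √T))]

theorem one_add_abs_le_of_sqrt_le {T s : ℝ} (hT : 0 ≤ T) (hs : √T ≤ |s|) :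
    1 + |2 * T ^ ((3 : ℝ) / 2) + T * s| ≤ 3 * (1 + |s|) ^ 3 := by
  have hTs : T ≤ |s| ^ 2 := Real.sqrt_le_left (abs_nonneg s) |>.mp hs
  have htriangle : |2 * (T * √T) + T * s| ≤ 2 * (T * √T) + T * |s| := by
    simpa [abs_mul, abs_of_nonneg, hT] using abs_add_le (2 * (T * √T)) (T * s)
  rw [rpow_three_halves_eq_mul_sqrt hT]
  calc 1 + |2 * (T * √T) + T * s| ≤ 1 + (2 * (|s| ^ 2 * |s|) + |s| ^ 2 * |s|) := by
        grw [htriangle, hs, hTs]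
    _ ≤ 3 * (1 + |s|) ^ 3 := by nlinarith [abs_nonneg s, sq_nonneg |s|]

theorem one_add_abs_pow_mul_pow_le {T x : ℝ} (hT : 0 < T) (hx : x ≤ T ^ ((3 : ℝ) / 2)) (k m : ℕ) :
    (1 + |x|) ^ k * T ^ m ≤
      3 ^ k * (1 + |(x - 2 * T ^ ((3 : ℝ) / 2)) / T|) ^ (3 * k + 2 * m) := by
  have hsqrt := sqrt_le_abs_sub_div hT hx
  have hx_le := one_add_abs_le_of_sqrt_le hT.le hsqrt
  rw [mul_div_cancel₀ _ hT.ne', add_sub_cancel] at hx_le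
  set s := (x - 2 * T ^ ((3 : ℝ) / 2)) / T
  have hT_le : T ≤ (1 + |s|) ^ 2 :=
    Real.sqrt_le_left (by positivity) |>.mp (hsqrt.trans (by linarith))
  calc (1 + |x|) ^ k * T ^ m ≤ (3 * (1 + |s|) ^ 3) ^ k * ((1 + |s|) ^ 2) ^ m := by
        grw [hx_le, hT_le]
    _ = 3 ^ k * (1 + |s|) ^ (3 * k + 2 * m) := by
        rw [mul_pow, ← pow_mul, ← pow_mul, mul_assoc, ← pow_add]

theorem exists_setIntegral_Iic_le_div_pow {f : ℝ → ℝ} (hf : AEStronglyMeasurable f) {A : ℝ} {k : ℕ}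
    (hbd : ∀ x, |f x| ≤ A * (1 + |x|) ^ k) (g : 𝓢(ℝ, ℝ)) (n : ℕ) :
    ∃ C, 0 < C ∧ ∀ T, 0 < T →
      ∫ x in Iic (T ^ ((3 : ℝ) / 2)), |f x * g ((x - 2 * T ^ ((3 : ℝ) / 2)) / T)| ≤ C / T ^ n := by
  have hA : 0 ≤ A := by simpa using (abs_nonneg _).trans (hbd 0)
  set H : ℝ → ℝ := fun s => A * 3 ^ k * ((1 + ‖s‖) ^ (3 * k + 2 * (n + 1)) * ‖g s‖)
  have hH : Integrable H := (integrable_one_add_norm_pow_mul_norm volume g _).const_mul _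
  have hH₀ : 0 ≤ H := fun s => by positivity
  refine ⟨(∫ s, H s) + 1, by linarith [integral_nonneg (μ := volume) hH₀], fun T hT => ?_⟩
  set c := 2 * T ^ ((3 : ℝ) / 2)
  have hHT : Integrable fun x => H ((x - c) / T) / T ^ (n + 1) :=
    ((hH.comp_div hT.ne').comp_sub_right c).div_const _
  have htail : ∀ x ∈ Iic (T ^ ((3 : ℝ) / 2)),
      |f x * g ((x - c) / T)| ≤ H ((x - c) / T) / T ^ (n + 1) := fun x hx => by
    rw [le_div_iff₀ (by positivity), abs_mul]
    calc |f x| * |g ((x - c) / T)| * T ^ (n + 1)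
        ≤ A * ((1 + |x|) ^ k * T ^ (n + 1)) * |g ((x - c) / T)| := by
          grw [hbd x]
          exact le_of_eq (by ring)
      _ ≤ A * (3 ^ k * (1 + |(x - c) / T|) ^ (3 * k + 2 * (n + 1))) * |g ((x - c) / T)| := by
          grw [one_add_abs_pow_mul_pow_le hT hx]
      _ = H ((x - c) / T) := by
          simp only [H, Real.norm_eq_abs]
          ring
  calc ∫ x in Iic (T ^ ((3 : ℝ) / 2)), |f x * g ((x - c) / T)|
      ≤ ∫ x in Iic (T ^ ((3 : ℝ) / 2)), H ((x - c) / T) / T ^ (n + 1) :=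
        setIntegral_mono_on (integrable_mul_comp_sub_div hf hbd g c hT.ne').abs.integrableOn
          hHT.integrableOn measurableSet_Iic htail
    _ ≤ ∫ x, H ((x - c) / T) / T ^ (n + 1) :=
        setIntegral_le_integral hHT (.of_forall fun x => div_nonneg (hH₀ _) (by positivity))
    _ = (∫ s, H s) / T ^ n := by
        rw [integral_div, integral_sub_right_eq_self (fun x => H (x / T)) c,
          Measure.integral_comp_div H T, abs_of_pos hT, smul_eq_mul, pow_succ']
        field_simp
    _ ≤ ((∫ s, H s) + 1) / T ^ n := by gcongr; linarith

theorem uT_sign_change_detector_general (φ : 𝓢(ℝ, ℝ)) (hφ : Function.Even φ)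
    (f : ℝ → ℝ) (hf : AEStronglyMeasurable f) (A α : ℝ)
    (hbd : ∀ x : ℝ, |f x| ≤ A * (1 + |x|) ^ α)
    (hsign : (∀ᶠ x in atTop, 0 ≤ f x) ∨ ∀ᶠ x in atTop, f x ≤ 0) :
    ∀ n : ℕ, ∃ C : ℝ, 0 < C ∧ ∃ T₀ : ℝ, 0 < T₀ ∧ ∀ T : ℝ, T₀ ≤ T →
      Integrable (fun x : ℝ => |f x| * (uT φ T x).re) ∧
      Integrable (fun x : ℝ => f x * (uT φ T x).re) ∧
      0 ≤ (∫ x : ℝ, |f x| * (uT φ T x).re) - |∫ x : ℝ, f x * (uT φ T x).re| ∧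
      (∫ x : ℝ, |f x| * (uT φ T x).re) - |∫ x : ℝ, f x * (uT φ T x).re| ≤ C / T ^ n := by
  intro n
  obtain ⟨k, hk⟩ := exists_nat_ge α
  have hA : 0 ≤ A := by simpa using (abs_nonneg _).trans (hbd 0)
  have hbd_pow (x : ℝ) : |f x| ≤ A * (1 + |x|) ^ k := by
    rw [← Real.rpow_natCast]
    grw [hbd x, hk]
    linarith [abs_nonneg x]
  obtain ⟨C, hC, hC_tail⟩ := exists_setIntegral_Iic_le_div_pow hf hbd_pow (uTProfile φ) n
  obtain ⟨R, hR⟩ : ∃ R, (∀ x ≥ R, 0 ≤ f x) ∨ ∀ x ≥ R, f x ≤ 0 := by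
    simpa only [eventually_atTop, exists_or] using hsign
  refine ⟨2 * C, by positivity, max 1 R, by positivity, fun T hT => ?_⟩
  obtain ⟨hT_one, hRT⟩ := max_le_iff.mp hT
  have hT_pos : 0 < T := by linarith
  have hR_lt {x : ℝ} (hx : x ∉ Iic (T ^ ((3 : ℝ) / 2))) : R ≤ x :=
    hRT.trans ((Real.self_le_rpow_of_one_le hT_one (by norm_num)).trans (not_le.mp hx).le)
  simp only [re_uT_eq_uTProfile φ hT_pos]
  have hu_nonneg (x : ℝ) := uTProfile_nonneg hφ ((x - 2 * T ^ ((3 : ℝ) / 2)) / T)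
  have hint := integrable_mul_comp_sub_div hf hbd_pow (uTProfile φ)
    (2 * T ^ ((3 : ℝ) / 2)) hT_pos.ne'
  have habs (x : ℝ) : |f x| * uTProfile φ ((x - 2 * T ^ ((3 : ℝ) / 2)) / T) =
      |f x * uTProfile φ ((x - 2 * T ^ ((3 : ℝ) / 2)) / T)| := by
    rw [abs_mul, abs_of_nonneg (hu_nonneg x)]
  simp only [habs]
  refine ⟨hint.abs, hint, sub_nonneg.mpr abs_integral_le_integral_abs, ?_⟩
  have hsign_outside := hR.imp
    (fun h x hx => mul_nonneg (h x (hR_lt hx)) (hu_nonneg x))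
    (fun h x hx => mul_nonpos_of_nonpos_of_nonneg (h x (hR_lt hx)) (hu_nonneg x))
  grw [integral_abs_sub_abs_integral_le hint measurableSet_Iic hsign_outside, hC_tail T hT_pos,
    mul_div_assoc]

theorem IsBumpBase.hasCompactSupport {φ₀ : ℝ → ℝ} (hφ₀ : IsBumpBase φ₀) : HasCompactSupport φ₀ :=
  isCompact_Icc.of_isClosed_subset (isClosed_tsupport φ₀) hφ₀.2.2.1

end

/-- For `f` continuous of polynomial growth with only finitely many
zeros, `∫ |f| u_T − |∫ f u_T|` is nonnegative and decays rapidly as `T → ∞`. -/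
theorem uT_sign_change_detector
    (φ₀ : ℝ → ℝ) (hφ₀ : IsBumpBase φ₀)
    (f : ℝ → ℝ) (hf : Continuous f) (A α : ℝ) (hA : 0 < A) (hα : 0 < α)
    (hbd : ∀ x : ℝ, |f x| ≤ A * (1 + |x|) ^ α)
    (hzeros : {x : ℝ | f x = 0}.Finite) :
    ∀ n : ℕ, ∃ C : ℝ, 0 < C ∧ ∃ T₀ : ℝ, 0 < T₀ ∧ ∀ T : ℝ, T₀ ≤ T →
      Integrable (fun x : ℝ => |f x| * (uT φ₀ T x).re) ∧
      Integrable (fun x : ℝ => f x * (uT φ₀ T x).re) ∧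
      0 ≤ (∫ x : ℝ, |f x| * (uT φ₀ T x).re) - |∫ x : ℝ, f x * (uT φ₀ T x).re| ∧
      (∫ x : ℝ, |f x| * (uT φ₀ T x).re) - |∫ x : ℝ, f x * (uT φ₀ T x).re| ≤ C / T ^ n := by
  exact uT_sign_change_detector_general (hφ₀.hasCompactSupport.toSchwartzMap hφ₀.1) hφ₀.2.1 f
    hf.aestronglyMeasurable A α hbd <|
      (eventually_lt_or_eventually_gt_of_eventually_ne hf <|
        Filter.atTop_le_cofinite hzeros.compl_mem_cofinite).imp
          (.mono · fun _ => le_of_lt) (.mono · fun _ => le_of_lt)
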